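/- arXiv:1907.09166 — 3 statements merged into one kernel-verified Lean document; each statement's English description precedes it below -/
import Mathlib

section
/- Let V : ℝ^d → ℝ and b : ℝ^d → ℝ^d be smooth with ⟨b(x), ∇V(x)⟩ = 0 for all x ∈ ℝ^d, let s be a saddle point of V (∇V(s) = 0, Hess V(s) invertible with exactly one negative eigenvalue λ₁ < 0), let μ < 0 be a negative eigenvalue of Hess V(s) + B(s)ᵀ and let ξ ∈ ℝ^d be a unit vector with (Hess V(s) + B(s)ᵀ)ξ = μξ. Then |μ| ≥ |λ₁|, with equality if and only if B(s)ᵀξ = 0, and moreover ⟨(Hess V(s))⁻¹ξ, ξ⟩ = 1/μ < 0. -/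
/-!
Write `H = Hess V(s)` and `B = B(s)`. Differentiating `⟨b, ∇V⟩ = 0` once at `s` gives `H b(s) = 0`, so
`b(s) = 0`. Both `b` and `∇V` then vanish at `s`, and the second-order term of the identity along
a line through `s` is `⟨B v, H v⟩ = 0` for every `v` (`jac_dot_hess_eq_zero`).

Put `η = H⁻¹ ξ`. Pairing `H ξ + Bᵀ ξ = μ ξ` with `η` kills the `Bᵀ` term, because
`⟨Bᵀ ξ, η⟩ = ⟨H η, B η⟩ = 0`, and leaves `1 = ⟨ξ, ξ⟩ = μ ⟨ξ, H⁻¹ ξ⟩`.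

In an orthonormal eigenbasis of `H`, with `a` the coordinates of `ξ`, this reads
`∑ aᵢ² / λᵢ = 1 / μ` with `∑ aᵢ² = 1`. Since `λ₁` is the only negative eigenvalue, `1 / λ₁` is the
smallest of the numbers `1 / λᵢ`, so `1 / λ₁ ≤ 1 / μ`, that is `μ ≤ λ₁`. Equality forces `ξ` into
the `λ₁`-eigenspace, hence `Bᵀ ξ = 0`; conversely `Bᵀ ξ = 0` makes `μ` a negative eigenvalue of `H`,
hence equal to `λ₁`.
-/

open Matrix

/-- Partial derivative `∂_i f` of a real-valued function on `ℝ^d`. -/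
noncomputable def pdR {d : ℕ} (f : (Fin d → ℝ) → ℝ) (i : Fin d) : (Fin d → ℝ) → ℝ :=
  fun x => fderiv ℝ f x (Pi.single i 1)

/-- Euclidean gradient `∇V`. -/
noncomputable def gradV {d : ℕ} (V : (Fin d → ℝ) → ℝ) (x : Fin d → ℝ) : Fin d → ℝ :=
  fun i => pdR V i x

/-- Hessian matrix `Hess V(x)`, with entries `∂_i ∂_j V(x)`. -/
noncomputable def hessM {d : ℕ} (V : (Fin d → ℝ) → ℝ) (x : Fin d → ℝ) :
    Matrix (Fin d) (Fin d) ℝ :=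
  fun i j => pdR (pdR V j) i x

/-- Jacobian matrix `B(x)` of a vector field `b`, with entries `∂_j b_i(x)`. -/
noncomputable def jacM {d : ℕ} (b : (Fin d → ℝ) → Fin d → ℝ) (x : Fin d → ℝ) :
    Matrix (Fin d) (Fin d) ℝ :=
  fun i j => pdR (fun y => b y i) j x

theorem fderiv_apply_eq_sum_pdR {d : ℕ} (f : (Fin d → ℝ) → ℝ) (x v : Fin d → ℝ) :
    fderiv ℝ f x v = ∑ j, pdR f j x * v j := by
  conv_lhs => rw [pi_eq_sum_univ' v]
  simp only [map_sum, map_smul, pdR, smul_eq_mul]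
  refine Finset.sum_congr rfl fun j _ => ?_
  rw [mul_comm]

theorem hasDerivAt_line {d : ℕ} {f : (Fin d → ℝ) → ℝ} {x : Fin d → ℝ}
    (hf : DifferentiableAt ℝ f x) (v : Fin d → ℝ) :
    HasDerivAt (fun t : ℝ => f (x + t • v)) (∑ j, pdR f j x * v j) 0 := by
  rw [← fderiv_apply_eq_sum_pdR]
  have hl : HasDerivAt (fun t : ℝ => x + t • v) v 0 := by
    simpa using ((hasDerivAt_id (0 : ℝ)).smul_const v).const_add x
  have hf' : HasFDerivAt f (fderiv ℝ f x) (x + (0 : ℝ) • v) := by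
    simpa using hf.hasFDerivAt
  exact hf'.comp_hasDerivAt (0 : ℝ) hl

/-- The quadratic part at a nondegenerate critical point of the relation `⟨b, ∇V⟩ = 0`: the matrix
`Hess V(s) B(s)` is skew-symmetric. -/
theorem jac_dot_hess_eq_zero {d : ℕ}
    (V : (Fin d → ℝ) → ℝ) (b : (Fin d → ℝ) → Fin d → ℝ)
    (hV : ContDiff ℝ (⊤ : ℕ∞) V) (hb : ContDiff ℝ (⊤ : ℕ∞) b)
    (horth : ∀ x, ∑ i, b x i * gradV V x i = 0)
    (s : Fin d → ℝ) (hcrit : gradV V s = 0)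
    (hsymm : (hessM V s)ᵀ = hessM V s) (hdet : (hessM V s).det ≠ 0) (v : Fin d → ℝ) :
    (jacM b s *ᵥ v) ⬝ᵥ (hessM V s *ᵥ v) = 0 := by
  have hdb : ∀ i, DifferentiableAt ℝ (fun y => b y i) s := fun i =>
    ((contDiff_pi.1 hb i).differentiable (by simp)).differentiableAt
  have hdG : ∀ i, DifferentiableAt ℝ (pdR V i) s := fun i => by
    have h : ContDiff ℝ 1 (fun x => fderiv ℝ V x (Pi.single i 1)) :=
      (hV.fderiv_right (m := 1) (by norm_cast)).clm_apply contDiff_const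
    exact (h.differentiable (by simp)).differentiableAt
  have hDb : ∀ w i, HasDerivAt (fun t : ℝ => b (s + t • w) i) ((jacM b s *ᵥ w) i) 0 :=
    fun w i => hasDerivAt_line (hdb i) w
  have hDG : ∀ w i, HasDerivAt (fun t : ℝ => pdR V i (s + t • w)) ((hessM V s *ᵥ w) i) 0 := by
    intro w i
    have h := hasDerivAt_line (hdG i) w
    -- `hessM` lists the outer derivative first, so the Jacobian of `∇V` is its transpose.
    rw [← hsymm]
    exact h
  have hG0 : ∀ i, pdR V i s = 0 := fun i => congrFun hcrit i
  have hfirst : ∀ w, b s ⬝ᵥ (hessM V s *ᵥ w) = 0 := by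
    intro w
    have h := HasDerivAt.fun_sum (u := Finset.univ) fun i _ => (hDb w i).mul (hDG w i)
    have h0 : HasDerivAt (fun _ : ℝ => (0 : ℝ)) 0 0 := hasDerivAt_const _ _
    have h1 := h.unique (h0.congr_of_eventuallyEq (.of_forall fun t => horth (s + t • w)))
    simpa [hG0, dotProduct] using h1
  have hbs : b s = 0 := by
    have h : hessM V s *ᵥ b s = 0 := by
      refine dotProduct_eq_zero _ fun w => ?_
      have h := hfirst w
      rwa [dotProduct_mulVec, ← mulVec_transpose, hsymm] at h
    exact eq_zero_of_mulVec_eq_zero hdet h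
  have hlim := tendsto_finsetSum Finset.univ fun i _ =>
    ((hDb v i).tendsto_slope_zero).mul ((hDG v i).tendsto_slope_zero)
  refine tendsto_nhds_unique hlim ?_
  refine tendsto_const_nhds.congr fun t => ?_
  have h := horth (s + t • v)
  simp only [gradV] at h
  simp only [zero_add, zero_smul, add_zero, hbs, hG0, Pi.zero_apply, sub_zero, smul_eq_mul]
  rw [← mul_zero (t⁻¹ * t⁻¹), ← h, Finset.mul_sum]
  exact Finset.sum_congr rfl fun i _ => by ring

/-- Orthogonal diagonalisation of a real symmetric matrix, phrased through the coordinate map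
`x ↦ P *ᵥ x` of an orthonormal eigenbasis. -/
theorem exists_eigen_coords {d : ℕ} {H : Matrix (Fin d) (Fin d) ℝ} (hH : H.IsHermitian) :
    ∃ P : Matrix (Fin d) (Fin d) ℝ, Pᵀ * P = 1 ∧
      ∀ x i, (P *ᵥ (H *ᵥ x)) i = hH.eigenvalues i * (P *ᵥ x) i := by
  let U : Matrix (Fin d) (Fin d) ℝ := hH.eigenvectorUnitary
  have h1 : star U * U = 1 := Unitary.coe_star_mul_self hH.eigenvectorUnitary
  have h2 : U * star U = 1 := Unitary.coe_mul_star_self hH.eigenvectorUnitary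
  have hs : H = U * diagonal hH.eigenvalues * star U := by
    simpa [Unitary.conjStarAlgAut_apply, U, Function.comp_def] using hH.spectral_theorem
  refine ⟨star U, ?_, fun x i => ?_⟩
  · simpa [star_eq_conjTranspose] using h2
  · have h3 : star U * H = diagonal hH.eigenvalues * star U := by
      conv_lhs => rw [hs]
      rw [← mul_assoc, ← mul_assoc, h1, one_mul]
    rw [mulVec_mulVec, h3, ← mulVec_mulVec, mulVec_diagonal]

/-- If `⟨b, ∇V⟩ ≡ 0`, `s` is a saddle point of `V` with negative Hessian eigenvalue `λ₁`,
`μ < 0` is a negative eigenvalue of `Hess V(s) + B(s)ᵀ` with unit eigenvector `ξ`, then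
`|μ| ≥ |λ₁|` with equality iff `B(s)ᵀξ = 0`, and `⟨(Hess V(s))⁻¹ξ, ξ⟩ = 1/μ < 0`. -/
theorem abs_mu_ge_abs_lambda_one
    (d : ℕ) (hd : 1 ≤ d)
    (V : (Fin d → ℝ) → ℝ) (b : (Fin d → ℝ) → Fin d → ℝ)
    (hV : ContDiff ℝ (⊤ : ℕ∞) V) (hb : ContDiff ℝ (⊤ : ℕ∞) b)
    (horth : ∀ x, ∑ i, b x i * gradV V x i = 0)
    (s : Fin d → ℝ)
    (hcrit : gradV V s = 0)
    (hherm : (hessM V s).IsHermitian)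
    (hdet : (hessM V s).det ≠ 0)
    (hone : ∃! i : Fin d, hherm.eigenvalues i < 0)
    (lam₁ : ℝ) (hlam₁neg : lam₁ < 0)
    (hlam₁ : ∃ v : Fin d → ℝ, v ≠ 0 ∧ (hessM V s).mulVec v = lam₁ • v)
    (μ : ℝ) (hμ : μ < 0)
    (ξ : Fin d → ℝ) (hξunit : ∑ i, ξ i * ξ i = 1)
    (hξ : (hessM V s + (jacM b s)ᵀ).mulVec ξ = μ • ξ) :
    |lam₁| ≤ |μ| ∧
      (|μ| = |lam₁| ↔ (jacM b s)ᵀ.mulVec ξ = 0) ∧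
      ∑ i, ((hessM V s)⁻¹.mulVec ξ) i * ξ i = 1 / μ ∧
      1 / μ < 0 := by
  set H := hessM V s with hHdef
  have hsymm : Hᵀ = H := by simpa using hherm.eq
  have hunit : IsUnit H.det := isUnit_iff_ne_zero.2 hdet
  set η := H⁻¹ *ᵥ ξ with hη
  have hHη : H *ᵥ η = ξ := by rw [hη, mulVec_mulVec, mul_nonsing_inv _ hunit, one_mulVec]
  have hξ1 : ξ ⬝ᵥ ξ = 1 := hξunit
  have hHdot : ∀ x y, (H *ᵥ x) ⬝ᵥ y = x ⬝ᵥ (H *ᵥ y) := fun x y => by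
    rw [dotProduct_mulVec, ← mulVec_transpose, hsymm]
  have hskew : ((jacM b s)ᵀ *ᵥ ξ) ⬝ᵥ η = 0 := by
    have h := jac_dot_hess_eq_zero V b hV hb horth s hcrit hsymm hdet η
    rw [← hHdef, hHη] at h
    rw [mulVec_transpose, ← dotProduct_mulVec, dotProduct_comm]
    exact h
  have hpair : 1 = μ * (η ⬝ᵥ ξ) := by
    have h := congrArg (· ⬝ᵥ η) hξ
    simp only [add_mulVec, add_dotProduct, hskew, add_zero, hHdot, hHη, hξ1, smul_dotProduct,
      smul_eq_mul] at h
    rw [h, dotProduct_comm]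
  have hquad : η ⬝ᵥ ξ = 1 / μ := by
    rw [eq_div_iff hμ.ne, mul_comm]; exact hpair.symm
  obtain ⟨P, hP, hPH⟩ := exists_eigen_coords hherm
  have hPinj : ∀ x, P *ᵥ x = 0 → x = 0 := fun x hx => by
    rw [← one_mulVec x, ← hP, ← mulVec_mulVec, hx, mulVec_zero]
  have hPdot : ∀ x y, (P *ᵥ x) ⬝ᵥ (P *ᵥ y) = x ⬝ᵥ y := fun x y => by
    rw [dotProduct_mulVec, ← mulVec_transpose, mulVec_mulVec, hP, one_mulVec]
  -- Every eigenvalue of `H` occurs in the list `eigenvalues`.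
  have hoccurs : ∀ (l : ℝ) (v : Fin d → ℝ), v ≠ 0 → H *ᵥ v = l • v →
      ∃ i, hherm.eigenvalues i = l := by
    intro l v hv hl
    obtain ⟨i, hi⟩ := Function.ne_iff.1 (mt (hPinj v) hv)
    refine ⟨i, mul_right_cancel₀ hi ?_⟩
    rw [← hPH v i, hl, mulVec_smul, Pi.smul_apply, smul_eq_mul]
  obtain ⟨v, hv, hHv⟩ := hlam₁
  obtain ⟨i₁, hi₁⟩ := hoccurs lam₁ v hv hHv
  have hneg : ∀ i, hherm.eigenvalues i < 0 → i = i₁ := fun i hi =>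
    hone.unique hi (hi₁ ▸ hlam₁neg)
  have hcoord : ∀ i, (P *ᵥ ξ) i = hherm.eigenvalues i * (P *ᵥ η) i := fun i => by
    rw [← hPH, hHη]
  -- The quantity `⟨η, ξ⟩ - ⟨ξ, ξ⟩ / λ₁`, multiplied by `-λ₁ > 0` and written in coordinates; its
  -- terms are nonnegative because `λᵢ (λᵢ - λ₁) ≥ 0` for every `i`.
  have hsum : ∑ i, hherm.eigenvalues i * (hherm.eigenvalues i - lam₁) * (P *ᵥ η) i ^ 2
      = 1 - lam₁ / μ := by
    have h1 := hPdot ξ ξ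
    have h2 := hPdot η ξ
    rw [hξ1] at h1
    rw [hquad] at h2
    simp only [dotProduct, hcoord] at h1 h2
    rw [div_eq_mul_one_div, ← h2]
    rw [← h1, Finset.mul_sum, ← Finset.sum_sub_distrib]
    exact Finset.sum_congr rfl fun i _ => by ring
  have hnonneg : ∀ i ∈ Finset.univ,
      0 ≤ hherm.eigenvalues i * (hherm.eigenvalues i - lam₁) * (P *ᵥ η) i ^ 2 := by
    intro i _
    refine mul_nonneg ?_ (sq_nonneg _)
    rcases lt_or_ge (hherm.eigenvalues i) 0 with h | h
    · rw [hneg i h, hi₁]; simp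
    · exact mul_nonneg h (by linarith)
  have hle : μ ≤ lam₁ := by
    have h := Finset.sum_nonneg hnonneg
    rw [hsum, sub_nonneg, div_le_one_of_neg hμ] at h
    exact h
  refine ⟨by rw [abs_of_neg hμ, abs_of_neg hlam₁neg]; linarith, ?_, hquad,
    one_div_neg.2 hμ⟩
  rw [abs_of_neg hμ, abs_of_neg hlam₁neg, neg_inj]
  rw [add_mulVec] at hξ
  constructor
  · intro heq
    rw [heq, div_self hlam₁neg.ne, sub_self, Finset.sum_eq_zero_iff_of_nonneg hnonneg] at hsum
    have hHξ : H *ᵥ ξ = lam₁ • ξ := by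
      refine sub_eq_zero.1 (hPinj _ ?_)
      ext i
      rw [mulVec_sub, mulVec_smul, Pi.sub_apply, Pi.smul_apply, hPH, hcoord, smul_eq_mul,
        Pi.zero_apply]
      have h := hsum i (Finset.mem_univ i)
      rcases mul_eq_zero.1 h with h | h
      · linear_combination (P *ᵥ η) i * h
      · rw [pow_eq_zero_iff two_ne_zero] at h
        simp [h]
    rw [hHξ, heq] at hξ
    simpa using hξ
  · intro h0
    rw [h0, add_zero] at hξ
    have hξ0 : ξ ≠ 0 := fun h => by simp [h] at hξ1
    obtain ⟨i, hi⟩ := hoccurs μ ξ hξ0 hξ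
    rw [← hi, ← hi₁, hneg i (hi ▸ hμ)]
end

section
/- Let V : ℝ^d → ℝ be twice continuously differentiable and b : ℝ^d → ℝ^d be continuous with ⟨b(x), ∇V(x)⟩ = 0 for all x ∈ ℝ^d. If u ∈ ℝ^d is a nondegenerate critical point of V, i.e. ∇V(u) = 0 and the Hessian matrix Hess V(u) is invertible, then b(u) = 0. -/
/-!
Differentiating `⟨b, ∇V⟩ = 0` at the critical point `u` formally gives `Hess V(u) b(u) = 0`,
because the term carrying a derivative of `b` is multiplied by `∇V(u) = 0`. As `b` is only
continuous, the derivative is replaced by a limit of difference quotients: along `u + t e_i`,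
`0 = ⟨b(u + t e_i), ∇V(u + t e_i) / t⟩ → ∑_j b_j(u) ∂_i ∂_j V(u)` as `t → 0`, `t ≠ 0`.
Invertibility of the Hessian then forces `b(u) = 0`.
-/

open Matrix

lemma differentiable_pdR {d : ℕ} {V : (Fin d → ℝ) → ℝ} (hV : ContDiff ℝ 2 V) (j : Fin d) :
    Differentiable ℝ (pdR V j) := by
  have h : ContDiff ℝ 1 (fderiv ℝ V) := hV.fderiv_right (by norm_num)
  have h2 : ContDiff ℝ 1 (pdR V j) := h.clm_apply contDiff_const
  exact h2.differentiable (by norm_num)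

/-- At a critical point, the difference quotients of `∂_j V` in direction `e_i` reduce to
`∂_j V(u + t e_i) / t`, and they converge to the Hessian entry. -/
lemma tendsto_pdR_div {d : ℕ} {V : (Fin d → ℝ) → ℝ} (hV : ContDiff ℝ 2 V) {u : Fin d → ℝ}
    (hcrit : gradV V u = 0) (i j : Fin d) :
    Filter.Tendsto (fun t : ℝ => t⁻¹ * pdR V j (u + t • Pi.single i 1))
      (nhdsWithin 0 {0}ᶜ) (nhds (hessM V u i j)) := by
  have h := ((differentiable_pdR hV j u).hasFDerivAt.hasLineDerivAt
    (Pi.single i 1)).tendsto_slope_zero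
  have h0 : pdR V j u = 0 := congrFun hcrit j
  simp only [h0, sub_zero, smul_eq_mul] at h
  exact h

/-- If `V` is `C²`, `b` is continuous with `⟨b, ∇V⟩ ≡ 0`, and `u` is a nondegenerate
critical point of `V`, then `b(u) = 0`. -/
theorem b_vanishes_at_nondegenerate_critical_point
    (d : ℕ) (hd : 1 ≤ d)
    (V : (Fin d → ℝ) → ℝ) (b : (Fin d → ℝ) → Fin d → ℝ)
    (hV : ContDiff ℝ 2 V) (hb : Continuous b)
    (horth : ∀ x, ∑ i, b x i * gradV V x i = 0)
    (u : Fin d → ℝ)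
    (hcrit : gradV V u = 0)
    (hdet : (hessM V u).det ≠ 0) :
    b u = 0 := by
  refine Matrix.eq_zero_of_mulVec_eq_zero hdet (funext fun i => ?_)
  have hbt : ∀ j, Filter.Tendsto (fun t : ℝ => b (u + t • Pi.single i 1) j)
      (nhdsWithin 0 {0}ᶜ) (nhds (b u j)) := fun j => by
    have hc : Continuous fun t : ℝ => b (u + t • Pi.single i 1) j := by fun_prop
    simpa using (hc.tendsto 0).mono_left nhdsWithin_le_nhds
  have hlim := tendsto_finsetSum Finset.univ
    fun j _ => (tendsto_pdR_div hV hcrit i j).mul (hbt j)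
  have hzero : ∀ t : ℝ, ∑ j, t⁻¹ * pdR V j (u + t • Pi.single i 1) *
      b (u + t • Pi.single i 1) j = 0 := fun t => by
    have h := horth (u + t • Pi.single i 1)
    calc _ = t⁻¹ * ∑ j, b (u + t • Pi.single i 1) j * gradV V (u + t • Pi.single i 1) j := by
          rw [Finset.mul_sum]
          exact Finset.sum_congr rfl fun j _ => by simp only [gradV]; ring
      _ = 0 := by rw [h, mul_zero]
  simp only [hzero] at hlim
  exact tendsto_nhds_unique hlim tendsto_const_nhds
end

section
/- Let V : ℝ^d → ℝ be smooth and b, ν : ℝ^d → ℝ^d be smooth vector fields satisfying the stationarity conditions ⟨b, ∇V⟩ = 0, div ν = 0 and div b = ⟨ν, ∇V⟩ everywhere on ℝ^d, and let h > 0. Then for all compactly supported smooth functions u, v : ℝ^d → ℂ, ∫_{ℝ^d} (L_{V,b,ν}u)(x) · conj(v(x)) · e^{−V(x)/h} dx = ∫_{ℝ^d} u(x) · conj((L_{V,−b,−ν}v)(x)) · e^{−V(x)/h} dx. -/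
/-!
Write `w = b + hν` and `E = e^{-V/h}`. Pointwise,
`(L_{V,b,ν} u) v̄ E - u conj(L_{V,-b,-ν} v) E = div G`, where
`G = E ((w u - h ∇u) v̄ + h u ∇v̄)`.
Indeed the product rule produces, besides the terms on the left, only the multiple `u v̄ div (E w)`
of `div (E w) = E (div b + h div ν - ⟨b, ∇V⟩ / h - ⟨ν, ∇V⟩)`, which the stationarity conditions
make vanish (`sum_pdR_drift`). Each component of `G` is smooth with compact support, so each
`∂_i G_i` integrates to zero (`integral_pdC_eq_zero`).
-/

open MeasureTheory

/-- Partial derivative `∂_i u` of a complex-valued function on `ℝ^d`. -/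
noncomputable def pdC {d : ℕ} (u : (Fin d → ℝ) → ℂ) (i : Fin d) : (Fin d → ℝ) → ℂ :=
  fun x => fderiv ℝ u x (Pi.single i 1)

/-- Laplacian `Δu` of a complex-valued function. -/
noncomputable def lapC {d : ℕ} (u : (Fin d → ℝ) → ℂ) : (Fin d → ℝ) → ℂ :=
  fun x => ∑ i, pdC (pdC u i) i x

/-- Euclidean divergence of a vector field on `ℝ^d`. -/
noncomputable def divg {d : ℕ} (w : (Fin d → ℝ) → Fin d → ℝ) : (Fin d → ℝ) → ℝ :=
  fun x => ∑ i, pdR (fun y => w y i) i x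

/-- The generator `L_{V,b,ν} u = −hΔu + ⟨∇V, ∇u⟩ + ⟨b + hν, ∇u⟩`. -/
noncomputable def Lgen {d : ℕ} (h : ℝ) (V : (Fin d → ℝ) → ℝ)
    (b ν : (Fin d → ℝ) → Fin d → ℝ) (u : (Fin d → ℝ) → ℂ) : (Fin d → ℝ) → ℂ :=
  fun x => -(h : ℂ) * lapC u x + ∑ i, ((gradV V x i : ℝ) : ℂ) * pdC u i x
    + ∑ i, ((b x i + h * ν x i : ℝ) : ℂ) * pdC u i x

open scoped ContDiff

section PartialDerivatives

variable {d : ℕ} {f g : (Fin d → ℝ) → ℂ} {r : (Fin d → ℝ) → ℝ} {i : Fin d} {x : Fin d → ℝ}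

lemma pdC_add (hf : DifferentiableAt ℝ f x) (hg : DifferentiableAt ℝ g x) :
    pdC (fun y => f y + g y) i x = pdC f i x + pdC g i x := by
  simp [pdC, fderiv_fun_add hf hg]

lemma pdC_sub (hf : DifferentiableAt ℝ f x) (hg : DifferentiableAt ℝ g x) :
    pdC (fun y => f y - g y) i x = pdC f i x - pdC g i x := by
  simp [pdC, fderiv_fun_sub hf hg]

lemma pdC_mul (hf : DifferentiableAt ℝ f x) (hg : DifferentiableAt ℝ g x) :
    pdC (fun y => f y * g y) i x = f x * pdC g i x + pdC f i x * g x := by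
  simp [pdC, fderiv_fun_mul hf hg, mul_comm]

lemma pdC_const_mul (c : ℂ) (hf : DifferentiableAt ℝ f x) :
    pdC (fun y => c * f y) i x = c * pdC f i x := by
  simp [pdC, fderiv_const_mul hf]

lemma pdC_conj (hf : DifferentiableAt ℝ f x) :
    pdC (fun y => starRingEnd ℂ (f y)) i x = starRingEnd ℂ (pdC f i x) := by
  have h := (Complex.conjCLE.hasFDerivAt (x := f x)).comp x hf.hasFDerivAt
  have h' : HasFDerivAt (fun y => starRingEnd ℂ (f y)) _ x := h
  simp [pdC, h'.fderiv]

lemma pdC_ofReal (hr : DifferentiableAt ℝ r x) :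
    pdC (fun y => (r y : ℂ)) i x = (pdR r i x : ℂ) := by
  have h := (Complex.ofRealCLM.hasFDerivAt (x := r x)).comp x hr.hasFDerivAt
  have h' : HasFDerivAt (fun y => (r y : ℂ)) _ x := h
  simp [pdC, pdR, h'.fderiv]

lemma pdR_exp_neg_div (h : ℝ) (hr : DifferentiableAt ℝ r x) :
    pdR (fun y => Real.exp (-r y / h)) i x = Real.exp (-r x / h) * (-pdR r i x / h) := by
  have h' : HasFDerivAt (fun y => Real.exp (-r y / h)) _ x :=
    (hr.hasFDerivAt.neg.mul_const h⁻¹).exp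
  rw [pdR, h'.fderiv]
  simp [pdR, div_eq_mul_inv, mul_comm]

lemma contDiff_pdC (hf : ContDiff ℝ ∞ f) (i : Fin d) : ContDiff ℝ ∞ (pdC f i) :=
  (hf.fderiv_right (m := ∞) (by simp)).clm_apply contDiff_const

lemma contDiff_pdR (hr : ContDiff ℝ ∞ r) (i : Fin d) : ContDiff ℝ ∞ (pdR r i) :=
  (hr.fderiv_right (m := ∞) (by simp)).clm_apply contDiff_const

lemma contDiff_conj (hf : ContDiff ℝ ∞ f) : ContDiff ℝ ∞ (fun y => starRingEnd ℂ (f y)) :=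
  Complex.conjCLE.contDiff.comp hf

lemma contDiff_ofReal (hr : ContDiff ℝ ∞ r) : ContDiff ℝ ∞ (fun y => (r y : ℂ)) :=
  Complex.ofRealCLM.contDiff.comp hr

lemma integrable_pdC (hf : ContDiff ℝ ∞ f) (hf' : HasCompactSupport f) (i : Fin d) :
    Integrable (pdC f i) :=
  (contDiff_pdC hf i).continuous.integrable_of_hasCompactSupport (hf'.fderiv_apply ℝ _)

/-- The divergence theorem without boundary term, one component at a time: integration by parts
against the constant function `1`. -/
lemma integral_pdC_eq_zero (hf : ContDiff ℝ ∞ f) (hf' : HasCompactSupport f) (i : Fin d) :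
    ∫ x, pdC f i x = 0 := by
  have := integral_mul_fderiv_eq_neg_fderiv_mul_of_integrable (μ := volume)
    (f := fun _ : Fin d → ℝ => (1 : ℂ)) (g := f) (v := Pi.single i 1)
    (by simp) (by simpa [pdC] using! integrable_pdC hf hf' i)
    (by simpa using hf.continuous.integrable_of_hasCompactSupport hf')
    (fun _ _ => differentiableAt_const _) (fun x _ => hf.differentiable (by simp) x)
  simpa [pdC] using this

lemma continuous_Lgen {h : ℝ} {V : (Fin d → ℝ) → ℝ} {b ν : (Fin d → ℝ) → Fin d → ℝ}
    (hV : ContDiff ℝ ∞ V) (hb : ContDiff ℝ ∞ b) (hν : ContDiff ℝ ∞ ν) (hf : ContDiff ℝ ∞ f) :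
    Continuous (Lgen h V b ν f) := by
  have h1 := fun i => (contDiff_pdC hf i).continuous
  have h2 := fun i => (contDiff_pdC (contDiff_pdC hf i) i).continuous
  have h3 := fun i => (contDiff_pdR hV i).continuous
  have h4 := hb.continuous
  have h5 := hν.continuous
  unfold Lgen lapC gradV
  fun_prop

/-- `div (e^{-V/h} (b + hν)) = 0`, after division by `e^{-V/h}`. -/
lemma sum_pdR_drift {h : ℝ} (hh : h ≠ 0) {V : (Fin d → ℝ) → ℝ} {b ν : (Fin d → ℝ) → Fin d → ℝ}
    (hb : ContDiff ℝ ∞ b) (hν : ContDiff ℝ ∞ ν)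
    (hstat₁ : ∑ i, b x i * gradV V x i = 0) (hstat₂ : divg ν x = 0)
    (hstat₃ : divg b x = ∑ i, ν x i * gradV V x i) :
    ∑ i, (pdR (fun y => b y i + h * ν y i) i x
      - (b x i + h * ν x i) * pdR V i x / h) = 0 := by
  have key : ∀ i, pdR (fun y => b y i + h * ν y i) i x - (b x i + h * ν x i) * pdR V i x / h
      = pdR (fun y => b y i) i x + h * pdR (fun y => ν y i) i x
        - (1 / h) * (b x i * gradV V x i) - ν x i * gradV V x i := by
    intro i
    have h1 : DifferentiableAt ℝ (fun y => b y i) x :=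
      (contDiff_pi.1 hb i).differentiable (by simp) x
    have h2 : DifferentiableAt ℝ (fun y => ν y i) x :=
      (contDiff_pi.1 hν i).differentiable (by simp) x
    have h3 : pdR (fun y => b y i + h * ν y i) i x
        = pdR (fun y => b y i) i x + h * pdR (fun y => ν y i) i x := by
      simp [pdR, fderiv_fun_add h1 (h2.const_mul h), fderiv_const_mul h2]
    rw [h3, gradV]
    field_simp
    ring
  simp only [divg] at hstat₂ hstat₃
  simp only [key, Finset.sum_sub_distrib, Finset.sum_add_distrib, ← Finset.mul_sum, hstat₁,
    hstat₂, hstat₃]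
  ring

/-- The `i`-th component of the field `G = E ((w u - h ∇u) v̄ + h u ∇v̄)`, with
`w = b + hν` and `E = e^{-V/h}`. -/
noncomputable def flux (h : ℝ) (V : (Fin d → ℝ) → ℝ) (b ν : (Fin d → ℝ) → Fin d → ℝ)
    (u v : (Fin d → ℝ) → ℂ) (i : Fin d) : (Fin d → ℝ) → ℂ := fun y =>
  ((((b y i + h * ν y i : ℝ) : ℂ) * u y - (h : ℂ) * pdC u i y) * starRingEnd ℂ (v y)
    + ((h : ℂ) * u y) * starRingEnd ℂ (pdC v i y)) * ((Real.exp (-V y / h) : ℝ) : ℂ)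

variable {h : ℝ} {V : (Fin d → ℝ) → ℝ} {b ν : (Fin d → ℝ) → Fin d → ℝ}
  {u v : (Fin d → ℝ) → ℂ}

lemma contDiff_exp_weight (hV : ContDiff ℝ ∞ V) (h : ℝ) :
    ContDiff ℝ ∞ (fun y => Real.exp (-V y / h)) :=
  (hV.neg.div_const h).exp

lemma contDiff_drift (hb : ContDiff ℝ ∞ b) (hν : ContDiff ℝ ∞ ν) (h : ℝ) (i : Fin d) :
    ContDiff ℝ ∞ (fun y => b y i + h * ν y i) :=
  (contDiff_pi.1 hb i).add (contDiff_const.mul (contDiff_pi.1 hν i))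

lemma contDiff_flux (hV : ContDiff ℝ ∞ V) (hb : ContDiff ℝ ∞ b) (hν : ContDiff ℝ ∞ ν)
    (hu : ContDiff ℝ ∞ u) (hv : ContDiff ℝ ∞ v) (i : Fin d) :
    ContDiff ℝ ∞ (flux h V b ν u v i) :=
  (((((contDiff_ofReal (contDiff_drift hb hν h i)).mul hu).sub
    (contDiff_const.mul (contDiff_pdC hu i))).mul (contDiff_conj hv)).add
    ((contDiff_const.mul hu).mul (contDiff_conj (contDiff_pdC hv i)))).mul
    (contDiff_ofReal (contDiff_exp_weight hV h))

lemma hasCompactSupport_flux (hu : HasCompactSupport u) (i : Fin d) :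
    HasCompactSupport (flux h V b ν u v i) :=
  (((hu.mul_left.sub (hu.fderiv_apply ℝ (Pi.single i 1)).mul_left).mul_right).add
    hu.mul_left.mul_right).mul_right

/-- The pointwise identity behind the theorem, one coordinate at a time: `∂_i G_i` is the `i`-th
summand of `(L_{V,b,ν} u) v̄ E - u conj(L_{V,-b,-ν} v) E`, plus `u v̄ E` times the `i`-th summand of
`sum_pdR_drift`. The terms in `∂_i u conj(∂_i v)` cancel. -/
lemma pdC_flux (hh : h ≠ 0) (hV : ContDiff ℝ ∞ V) (hb : ContDiff ℝ ∞ b)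
    (hν : ContDiff ℝ ∞ ν) (hu : ContDiff ℝ ∞ u) (hv : ContDiff ℝ ∞ v) (i : Fin d)
    (x : Fin d → ℝ) :
    pdC (flux h V b ν u v i) i x =
      (-(h : ℂ) * pdC (pdC u i) i x + (gradV V x i : ℂ) * pdC u i x
          + ((b x i + h * ν x i : ℝ) : ℂ) * pdC u i x)
        * (starRingEnd ℂ (v x) * ((Real.exp (-V x / h) : ℝ) : ℂ))
      - starRingEnd ℂ (-(h : ℂ) * pdC (pdC v i) i x + (gradV V x i : ℂ) * pdC v i x
          + (((-b) x i + h * (-ν) x i : ℝ) : ℂ) * pdC v i x)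
        * (u x * ((Real.exp (-V x / h) : ℝ) : ℂ))
      + ((pdR (fun y => b y i + h * ν y i) i x
          - (b x i + h * ν x i) * pdR V i x / h : ℝ) : ℂ)
        * (u x * starRingEnd ℂ (v x) * ((Real.exp (-V x / h) : ℝ) : ℂ)) := by
  have diff : ∀ {f : (Fin d → ℝ) → ℂ}, ContDiff ℝ ∞ f → DifferentiableAt ℝ f x :=
    fun hf => hf.differentiable (by simp) x
  have hW := contDiff_drift hb hν h i
  have hE := contDiff_exp_weight hV h
  have hWc := contDiff_ofReal hW
  have hEc := contDiff_ofReal hE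
  have hu' := contDiff_pdC hu i
  have hv' := contDiff_pdC hv i
  have hcv := contDiff_conj hv
  have hcv' := contDiff_conj hv'
  have hc : ContDiff ℝ ∞ (fun _ : Fin d → ℝ => (h : ℂ)) := contDiff_const
  unfold flux
  rw [pdC_mul (diff ((((hWc.mul hu).sub (hc.mul hu')).mul hcv).add ((hc.mul hu).mul hcv')))
      (diff hEc),
    pdC_add (diff (((hWc.mul hu).sub (hc.mul hu')).mul hcv)) (diff ((hc.mul hu).mul hcv')),
    pdC_mul (diff ((hWc.mul hu).sub (hc.mul hu'))) (diff hcv),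
    pdC_sub (diff (hWc.mul hu)) (diff (hc.mul hu')),
    pdC_mul (diff hWc) (diff hu), pdC_const_mul _ (diff hu'),
    pdC_mul (diff (hc.mul hu)) (diff hcv'), pdC_const_mul _ (diff hu),
    pdC_conj (diff hv), pdC_conj (diff hv'),
    pdC_ofReal (hW.differentiable (by simp) x), pdC_ofReal (hE.differentiable (by simp) x),
    pdR_exp_neg_div h (hV.differentiable (by simp) x)]
  have hhc : (h : ℂ) ≠ 0 := by exact_mod_cast hh
  simp only [gradV, map_add, map_mul, map_neg, Complex.conj_ofReal, Pi.neg_apply]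
  push_cast
  field_simp
  ring

end PartialDerivatives

/-- Under the stationarity conditions `⟨b, ∇V⟩ = 0`, `div ν = 0`, `div b = ⟨ν, ∇V⟩`,
the formal adjoint of `L_{V,b,ν}` in `L²(e^{−V/h} dx)` is `L_{V,−b,−ν}`. -/
theorem Lgen_formal_adjoint
    (d : ℕ) (hd : 1 ≤ d)
    (V : (Fin d → ℝ) → ℝ) (b ν : (Fin d → ℝ) → Fin d → ℝ)
    (hV : ContDiff ℝ (⊤ : ℕ∞) V) (hb : ContDiff ℝ (⊤ : ℕ∞) b) (hν : ContDiff ℝ (⊤ : ℕ∞) ν)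
    (hstat₁ : ∀ x, ∑ i, b x i * gradV V x i = 0)
    (hstat₂ : ∀ x, divg ν x = 0)
    (hstat₃ : ∀ x, divg b x = ∑ i, ν x i * gradV V x i)
    (h : ℝ) (hh : 0 < h)
    (u v : (Fin d → ℝ) → ℂ)
    (hu : ContDiff ℝ (⊤ : ℕ∞) u) (hv : ContDiff ℝ (⊤ : ℕ∞) v)
    (hu' : HasCompactSupport u) (hv' : HasCompactSupport v) :
    ∫ x : Fin d → ℝ, Lgen h V b ν u x * (starRingEnd ℂ) (v x) * (Real.exp (-V x / h) : ℂ)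
      = ∫ x : Fin d → ℝ,
          u x * (starRingEnd ℂ) (Lgen h V (-b) (-ν) v x) * (Real.exp (-V x / h) : ℂ) := by
  have hGs := fun i => contDiff_flux (h := h) hV hb hν hu hv i
  have hGc := fun i => hasCompactSupport_flux (h := h) (V := V) (b := b) (ν := ν) (v := v) hu' i
  have hE := (contDiff_ofReal (contDiff_exp_weight hV h)).continuous
  have hcv : HasCompactSupport (fun x => starRingEnd ℂ (v x)) := hv'.comp_left (map_zero _)
  have hint₁ : Integrable (fun x : Fin d → ℝ =>
      Lgen h V b ν u x * (starRingEnd ℂ) (v x) * (Real.exp (-V x / h) : ℂ)) :=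
    (((continuous_Lgen hV hb hν hu).mul (contDiff_conj hv).continuous).mul
      hE).integrable_of_hasCompactSupport hcv.mul_left.mul_right
  have hint₂ : Integrable (fun x : Fin d → ℝ =>
      u x * (starRingEnd ℂ) (Lgen h V (-b) (-ν) v x) * (Real.exp (-V x / h) : ℂ)) :=
    ((hu.continuous.mul (Complex.continuous_conj.comp
      (continuous_Lgen hV hb.neg hν.neg hv))).mul
      hE).integrable_of_hasCompactSupport hu'.mul_right.mul_right
  rw [← sub_eq_zero, ← integral_sub hint₁ hint₂]
  have hdiv : ∀ x, Lgen h V b ν u x * (starRingEnd ℂ) (v x) * (Real.exp (-V x / h) : ℂ)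
      - u x * (starRingEnd ℂ) (Lgen h V (-b) (-ν) v x) * (Real.exp (-V x / h) : ℂ)
      = ∑ i, pdC (flux h V b ν u v i) i x := by
    intro x
    have hdrift := sum_pdR_drift hh.ne' hb hν (hstat₁ x) (hstat₂ x) (hstat₃ x)
    simp only [pdC_flux hh.ne' hV hb hν hu hv, Finset.sum_add_distrib, Finset.sum_sub_distrib,
      ← Finset.sum_mul, ← map_sum, ← Complex.ofReal_sum, hdrift, ← Finset.mul_sum]
    simp only [Lgen, lapC, Complex.ofReal_zero]
    ring
  simp only [hdiv]
  rw [integral_finsetSum _ fun i _ => integrable_pdC (hGs i) (hGc i) i]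
  exact Finset.sum_eq_zero fun i _ => integral_pdC_eq_zero (hGs i) (hGc i) i
end
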